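/- Let E be the elliptic curve y² = x³ + ax + b over the finite field F_p (p > 3 prime, with 4a³ + 27b² ≠ 0 in F_p), and let a_p = p + 1 − #E(F_p). Then |a_p| ≤ 2·√p. -/

import Mathlib

section EllipticCurve

open Polynomial

namespace WeierstrassCurve

open Affine.Point in
/-- `addSubMap` computes the `x`-coordinates of the sum and difference of two distinct affine
points, up to a common factor. -/
lemma eval_addSubMap_sym2x_of_X_ne {K : Type*} [Field K] [DecidableEq K] (W : WeierstrassCurve K)
    {x₁ y₁ x₂ y₂ : K} (h₁ : W.toAffine.Nonsingular x₁ y₁) (h₂ : W.toAffine.Nonsingular x₂ y₂)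
    (hx : x₁ ≠ x₂) :
    ∃ k : K, k ≠ 0 ∧ ∀ i,
      (addSubMap W i).eval ((Affine.Point.some x₁ y₁ h₁).sym2x (.some x₂ y₂ h₂)) =
      k * (Affine.Point.some x₁ y₁ h₁ + .some x₂ y₂ h₂).sym2x (.some x₁ y₁ h₁ - .some x₂ y₂ h₂) i := by
  have hd : x₁ - x₂ ≠ 0 := sub_ne_zero.mpr hx
  refine ⟨(x₁ - x₂) ^ 2, pow_ne_zero _ hd, ?_⟩
  have e₁ := (W.toAffine.equation_iff _ _).mp h₁.1
  have e₂ := (W.toAffine.equation_iff _ _).mp h₂.1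
  rw [sub_eq_add_neg (Affine.Point.some _ _ _), neg_some, add_of_X_ne hx, add_of_X_ne hx,
    sym2x_some_some, sym2x_some_some]
  intro i
  fin_cases i
  · simp [addSubMap, Affine.addX, Affine.slope_of_X_ne hx, Affine.negY, b₂, b₄, b₆, b₈]
    field_simp
    set f₁ := x₁ ^ 3 + W.a₂ * x₁ ^ 2 + W.a₄ * x₁ + W.a₆ with hf₁
    set f₂ := x₂ ^ 3 + W.a₂ * x₂ ^ 2 + W.a₄ * x₂ + W.a₆ with hf₂
    set E₁ := y₁ ^ 2 + W.a₁ * x₁ * y₁ + W.a₃ * y₁ - f₁ with hE₁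
    set E₂ := y₂ ^ 2 + W.a₁ * x₂ * y₂ + W.a₃ * y₂ - f₂ with hE₂
    set A := 2 * (f₁ + f₂ - (W.a₂ + x₁ + x₂) * (x₁ - x₂) ^ 2) + E₁ + E₂ +
      (W.a₁ * x₁ + W.a₃) * (W.a₁ * x₂ + W.a₃) with hA
    linear_combination (-(A - (W.a₁ * x₂ + W.a₃) ^ 2 - 4 * f₂ - 4 * E₂)) * e₁
      - (A - 4 * f₁ - (W.a₁ * x₁ + W.a₃) ^ 2) * e₂
  · simp [addSubMap, Affine.addX, Affine.slope_of_X_ne hx, Affine.negY, b₂, b₄, b₆, b₈]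
    field_simp
    linear_combination (-2) * e₁ - 2 * e₂
  · simp [addSubMap]
    ring

open Affine.Point in
lemma eval_addSubMap_sym2x_self {K : Type*} [Field K] [DecidableEq K] (W : WeierstrassCurve K)
    [W.IsElliptic] (P : W.toAffine.Point) :
    ∃ k : K, k ≠ 0 ∧ ∀ i, (addSubMap W i).eval (P.sym2x P) = k * (P + P).sym2x 0 i := by
  match P with
  | 0 =>
    refine ⟨1, one_ne_zero, fun i ↦ ?_⟩
    fin_cases i <;> simp [addSubMap]
  | .some x y h =>
    have e := (W.toAffine.equation_iff _ _).mp h.1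
    have h4 : (2 * y + W.a₁ * x + W.a₃) ^ 2 = 4 * x ^ 3 + W.b₂ * x ^ 2 + 2 * W.b₄ * x + W.b₆ := by
      simp only [b₂, b₄, b₆]
      linear_combination 4 * e
    by_cases hy : y = W.toAffine.negY x y
    · have h0 : 2 * y + W.a₁ * x + W.a₃ = 0 := by
        rw [Affine.negY] at hy
        linear_combination hy
      rw [h0] at h4
      have h1 : (addSubMap W 1).eval ((Affine.Point.some x y h).sym2x (.some x y h)) = 0 := by
        simp [addSubMap]
        linear_combination - h4
      have h2 : (addSubMap W 2).eval ((Affine.Point.some x y h).sym2x (.some x y h)) = 0 := by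
        simp [addSubMap]
        ring
      refine ⟨(addSubMap W 0).eval ((Affine.Point.some x y h).sym2x (.some x y h)),
        fun h3 ↦ ?_, fun i ↦ ?_⟩
      · refine addSubMap_ne_zero W (sym2x_ne_zero (.some x y h) (.some x y h)) ?_
        funext i
        match i with
        | 0 => exact h3
        | 1 => exact h1
        | 2 => exact h2
      · rw [add_self_of_Y_eq hy]
        fin_cases i
        · simp
        · simpa using h1
        · simpa using h2
    · have h0 : 2 * y + W.a₁ * x + W.a₃ ≠ 0 := by
        contrapose hy
        rw [Affine.negY]
        linear_combination hy
      refine ⟨(2 * y + W.a₁ * x + W.a₃) ^ 2, pow_ne_zero _ h0, fun i ↦ ?_⟩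
      have h0' : y - W.toAffine.negY x y ≠ 0 := by
        rwa [sub_ne_zero]
      rw [add_self_of_Y_ne hy, sym2x_some_zero, sym2x_some_some, Affine.slope_of_Y_ne rfl hy,
        Affine.addX]
      have hn : y - W.toAffine.negY x y = 2 * y + W.a₁ * x + W.a₃ := by
        rw [Affine.negY]; ring
      rw [hn]
      fin_cases i
      · obtain ⟨β, hβ⟩ : ∃ β, β = 2 * y + W.a₁ * x + W.a₃ := ⟨_, rfl⟩
        simp only [addSubMap, b₂, b₄, b₆, b₈, ← hβ] at h0 ⊢
        simp
        field_simp
        subst hβ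
        linear_combination (W.a₁ ^ 2 + 4 * W.a₂ + 8 * x) * e
      · simp [addSubMap, h4]
        ring
      · simp [addSubMap]
        ring

open Affine.Point in
/-- `addSubMap` sends `(x(P) * x(Q) : x(P) + x(Q) : 1)` to
`(x(P + Q) * x(P - Q) : x(P + Q) + x(P - Q) : 1)`. -/
theorem exists_eval_addSubMap_sym2x {K : Type*} [Field K] [DecidableEq K] (W : WeierstrassCurve K)
    [W.IsElliptic] (P Q : W.toAffine.Point) :
    ∃ k : K, k ≠ 0 ∧ ∀ i, (addSubMap W i).eval (P.sym2x Q) = k * (P + Q).sym2x (P - Q) i := by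
  by_cases hPQ : P = Q
  · subst hPQ
    simpa using eval_addSubMap_sym2x_self W P
  by_cases hPQ' : P = -Q
  · subst hPQ'
    obtain ⟨k, hk, h⟩ := eval_addSubMap_sym2x_self W Q
    refine ⟨k, hk, fun i ↦ ?_⟩
    rw [sym2x_neg_left, h, neg_add_cancel, ← neg_add', sym2x_neg_right, sym2x_comm]
  match P, Q with
  | 0, 0 => exact absurd rfl hPQ
  | 0, .some x y h =>
    refine ⟨1, one_ne_zero, fun i ↦ ?_⟩
    rw [zero_add, zero_sub, sym2x_neg_right]
    fin_cases i <;> simp [addSubMap] <;> ring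
  | .some x y h, 0 =>
    refine ⟨1, one_ne_zero, fun i ↦ ?_⟩
    rw [add_zero, sub_zero]
    fin_cases i <;> simp [addSubMap] <;> ring
  | .some x₁ y₁ h₁, .some x₂ y₂ h₂ =>
    refine eval_addSubMap_sym2x_of_X_ne W h₁ h₂ fun hx ↦ ?_
    rcases X_eq_iff.mp hx with h | h
    · exact hPQ h
    · exact hPQ' h

end WeierstrassCurve

/-- The largest degree of the entries of a vector of three polynomials. -/
def maxNatDegree {F : Type*} [Field F] (v : Fin 3 → F[X]) : ℕ :=
  Finset.univ.sup fun i ↦ (v i).natDegree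

lemma maxNatDegree_eq {F : Type*} [Field F] {v : Fin 3 → F[X]} {D : ℕ}
    (h : ∀ i, (v i).natDegree ≤ D) (h' : ∃ i, (v i).coeff D ≠ 0) : maxNatDegree v = D := by
  obtain ⟨i, hi⟩ := h'
  refine le_antisymm (Finset.sup_le fun i _ ↦ h i) ?_
  exact (le_natDegree_of_ne_zero hi).trans
    (Finset.le_sup (f := fun i ↦ (v i).natDegree) (Finset.mem_univ i))

lemma natDegree_le_maxNatDegree {F : Type*} [Field F] (v : Fin 3 → F[X]) (i : Fin 3) :
    (v i).natDegree ≤ maxNatDegree v :=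
  Finset.le_sup (f := fun i ↦ (v i).natDegree) (Finset.mem_univ i)

/-- The vector of polynomials has no common prime factor. -/
def IsPrimitiveVec {F : Type*} [Field F] (v : Fin 3 → F[X]) : Prop :=
  ∀ q : F[X], Prime q → ∃ i, ¬ q ∣ v i

lemma IsPrimitiveVec.isUnit {F : Type*} [Field F] {v : Fin 3 → F[X]} (hv : IsPrimitiveVec v)
    {d : F[X]} (hd : d ≠ 0) (h : ∀ i, d ∣ v i) : IsUnit d := by
  by_contra hu
  obtain ⟨q, hq, hqd⟩ := WfDvdMonoid.exists_irreducible_factor hu hd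
  obtain ⟨i, hi⟩ := hv q hq.prime
  exact hi (hqd.trans (h i))

lemma IsPrimitiveVec.maxNatDegree_eq_of_proportional {F : Type*} [Field F] {v w : Fin 3 → F[X]}
    (hv : IsPrimitiveVec v) (hw : IsPrimitiveVec w) {k : RatFunc F} (hk : k ≠ 0)
    (h : ∀ i, algebraMap F[X] (RatFunc F) (v i) = k * algebraMap F[X] (RatFunc F) (w i)) :
    maxNatDegree v = maxNatDegree w := by
  have key (i) : v i * k.denom = k.num * w i := by
    apply RatFunc.algebraMap_injective F
    rw [map_mul, map_mul, h i]
    nth_rewrite 1 [← RatFunc.num_div_denom k]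
    have := RatFunc.algebraMap_ne_zero k.denom_ne_zero
    field_simp
  have hc := RatFunc.isCoprime_num_denom k
  have hd : IsUnit k.denom := hw.isUnit k.denom_ne_zero fun i ↦
    hc.symm.dvd_of_dvd_mul_left (Dvd.intro_left _ (key i))
  have hn : IsUnit k.num := hv.isUnit (RatFunc.num_ne_zero hk) fun i ↦
    hc.dvd_of_dvd_mul_right (Dvd.intro _ (key i).symm)
  unfold maxNatDegree
  congr 1
  funext i
  have := congrArg natDegree (key i)
  obtain ⟨c, hc0, hc⟩ := Polynomial.isUnit_iff.mp hd
  obtain ⟨e, he0, he⟩ := Polynomial.isUnit_iff.mp hn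
  rwa [← hc, ← he, natDegree_mul_C hc0.ne_zero, natDegree_C_mul he0.ne_zero] at this

/-- The vector of coefficients of the product of two binary linear forms. -/
def sym2Vec {R : Type*} [CommRing R] (u v u' v' : R) : Fin 3 → R :=
  ![u * u', u * v' + v * u', v * v']

lemma isPrimitiveVec_sym2Vec {F : Type*} [Field F] {u v u' v' : F[X]} (h : IsCoprime u v)
    (h' : IsCoprime u' v') : IsPrimitiveVec (sym2Vec u v u' v') := by
  intro q hq
  by_contra! H
  have H0 : q ∣ u * u' := H 0
  have H1 : q ∣ u * v' + v * u' := H 1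
  have H2 : q ∣ v * v' := H 2
  have hu : q ∣ u → q ∣ v → False := fun a b ↦ hq.not_isUnit (h.isUnit_of_dvd' a b)
  have hu' : q ∣ u' → q ∣ v' → False := fun a b ↦ hq.not_isUnit (h'.isUnit_of_dvd' a b)
  rcases hq.dvd_or_dvd H0 with a | a <;> rcases hq.dvd_or_dvd H2 with b | b
  · exact hu a b
  · rw [dvd_add_right (a.mul_right _)] at H1
    rcases hq.dvd_or_dvd H1 with c | c
    · exact hu a c
    · exact hu' c b
  · rw [dvd_add_left (b.mul_right _)] at H1
    rcases hq.dvd_or_dvd H1 with c | c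
    · exact hu c b
    · exact hu' a c
  · exact hu' a b

lemma exists_coeff_max_ne_zero {F : Type*} [Field F] {u v : F[X]} (h : IsCoprime u v) :
    u.coeff (max u.natDegree v.natDegree) ≠ 0 ∨ v.coeff (max u.natDegree v.natDegree) ≠ 0 := by
  rcases le_total u.natDegree v.natDegree with hle | hle
  · rw [max_eq_right hle]
    by_cases hv : v = 0
    · left
      subst hv
      have hu : IsUnit u := isCoprime_zero_right.mp h
      obtain ⟨c, hc, rfl⟩ := Polynomial.isUnit_iff.mp hu
      simpa using hc.ne_zero
    · right
      simpa using hv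
  · rw [max_eq_left hle]
    by_cases hu : u = 0
    · right
      subst hu
      have hv : IsUnit v := isCoprime_zero_left.mp h
      obtain ⟨c, hc, rfl⟩ := Polynomial.isUnit_iff.mp hv
      simpa using hc.ne_zero
    · left
      simpa using hu

lemma maxNatDegree_sym2Vec {F : Type*} [Field F] {u v u' v' : F[X]} (h : IsCoprime u v)
    (h' : IsCoprime u' v') : maxNatDegree (sym2Vec u v u' v') =
      max u.natDegree v.natDegree + max u'.natDegree v'.natDegree := by
  have hc := exists_coeff_max_ne_zero h
  have hc' := exists_coeff_max_ne_zero h'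
  have hu := le_max_left u.natDegree v.natDegree
  have hv := le_max_right u.natDegree v.natDegree
  have hu' := le_max_left u'.natDegree v'.natDegree
  have hv' := le_max_right u'.natDegree v'.natDegree
  generalize max u.natDegree v.natDegree = d at *
  generalize max u'.natDegree v'.natDegree = d' at *
  refine maxNatDegree_eq (fun i ↦ ?_) ?_
  · fin_cases i
    · exact natDegree_mul_le_of_le hu hu'
    · exact natDegree_add_le_of_degree_le (natDegree_mul_le_of_le hu hv')
        (natDegree_mul_le_of_le hv hu')
    · exact natDegree_mul_le_of_le hv hv'
  · by_contra! H
    have H0 := H 0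
    have H1 := H 1
    have H2 := H 2
    simp only [sym2Vec, Matrix.cons_val_zero, Matrix.cons_val_one, Matrix.cons_val, coeff_add,
      coeff_mul_add_eq_of_natDegree_le, hu, hv, hu', hv'] at H0 H1 H2
    grind

namespace WeierstrassCurve

/-- The values of `addSubMap` for a curve with constant coefficients. -/
noncomputable def constAddSub {F : Type*} [Field F] (E : WeierstrassCurve F) (x : Fin 3 → F[X]) :
    Fin 3 → F[X] :=
  ![x 0 * x 0 - C E.b₄ * (x 0 * x 2) - C E.b₆ * (x 1 * x 2) - C E.b₈ * (x 2 * x 2),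
    C 2 * (x 1 * x 0) + C E.b₂ * (x 0 * x 2) + C E.b₄ * (x 1 * x 2) + C E.b₆ * (x 2 * x 2),
    x 1 * x 1 - C 4 * (x 0 * x 2)]

lemma eval_addSubMap_map_C {F : Type*} [Field F] (E : WeierstrassCurve F) (x : Fin 3 → F[X])
    (i : Fin 3) : (addSubMap (E.map C) i).eval x = constAddSub E x i := by
  fin_cases i <;> simp [addSubMap, constAddSub, map_ofNat C] <;> ring

lemma isPrimitiveVec_constAddSub {F : Type*} [Field F] (E : WeierstrassCurve F) [E.IsElliptic]
    {x : Fin 3 → F[X]} (hx : IsPrimitiveVec x) : IsPrimitiveVec (constAddSub E x) := by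
  intro q hq
  by_contra! H
  obtain ⟨i, hi⟩ := hx q hq
  refine hi (hq.dvd_of_dvd_pow (n := 4) ?_)
  rw [← addSubMapCoeff_condition (E.map C) x i]
  exact Finset.dvd_sum fun j _ ↦ (eval_addSubMap_map_C E x j ▸ H j).mul_left _

lemma maxNatDegree_constAddSub {F : Type*} [Field F] (E : WeierstrassCurve F) [E.IsElliptic]
    {x : Fin 3 → F[X]} (hx : IsPrimitiveVec x) :
    maxNatDegree (constAddSub E x) = 2 * maxNatDegree x := by
  have hd := natDegree_le_maxNatDegree x
  have hne : (fun i ↦ (x i).coeff (maxNatDegree x)) ≠ 0 := by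
    intro h0
    obtain ⟨i, -, hi⟩ := Finset.exists_mem_eq_sup Finset.univ Finset.univ_nonempty
      (fun i ↦ (x i).natDegree)
    have h1 : maxNatDegree x = (x i).natDegree := hi
    have h2 : x i = 0 := by simpa [h1] using congrFun h0 i
    have h3 (j) : (x j).natDegree = 0 := by
      have := hd j
      rw [h1, h2, natDegree_zero] at this
      lia
    obtain ⟨j, hj⟩ := hx X prime_X
    apply hj
    have := congrFun h0 j
    simp only [h1, h2, natDegree_zero, Pi.zero_apply] at this
    rwa [X_dvd_iff]
  generalize maxNatDegree x = D at *
  have h0 := hd 0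
  have h1 := hd 1
  have h2 := hd 2
  have hcoeff (i) : (constAddSub E x i).coeff (2 * D) =
      (addSubMap E i).eval fun i ↦ (x i).coeff D := by
    rw [two_mul]
    have h3 (i j) : (x i * x j).coeff (D + D) = (x i).coeff D * (x j).coeff D :=
      coeff_mul_add_eq_of_natDegree_le (hd i) (hd j)
    fin_cases i
    · simp [addSubMap, constAddSub, h3, coeff_C_mul]
      ring
    · simp [addSubMap, constAddSub, h3, coeff_C_mul]
      ring
    · simp [addSubMap, constAddSub, h3, coeff_C_mul]
      ring
  refine maxNatDegree_eq (fun i ↦ ?_) ?_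
  · have hm (i j) : (x i * x j).natDegree ≤ 2 * D :=
      two_mul D ▸ natDegree_mul_le_of_le (hd i) (hd j)
    have hm' (c i j) : (C c * (x i * x j)).natDegree ≤ 2 * D :=
      (natDegree_C_mul_le _ _).trans (hm i j)
    fin_cases i
    · exact natDegree_sub_le_of_le (natDegree_sub_le_of_le (natDegree_sub_le_of_le (hm _ _)
        (hm' _ _ _)) (hm' _ _ _)) (hm' _ _ _) |>.trans (by simp)
    · exact natDegree_add_le_of_degree_le (natDegree_add_le_of_degree_le
        (natDegree_add_le_of_degree_le (hm' _ _ _) (hm' _ _ _)) (hm' _ _ _)) (hm' _ _ _)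
    · exact natDegree_sub_le_of_le (hm _ _) (hm' _ _ _) |>.trans (by simp)
  · by_contra! H
    refine addSubMap_ne_zero E hne ?_
    funext i
    rw [← hcoeff, H]
    rfl

end WeierstrassCurve

section Twist

open WeierstrassCurve

variable {F : Type*} [Field F] (a b : F)

/-- The Weierstrass curve `y² = x³ + ax + b`. -/
def shortCurve : WeierstrassCurve F := ⟨0, 0, 0, a, b⟩

/-- The polynomial `X³ + aX + b`. -/
noncomputable def cubic : F[X] := X ^ 3 + C a * X + C b

/-- The quadratic twist of `y² = x³ + ax + b` over the rational function field by `cubic a b`. -/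
noncomputable def twist : WeierstrassCurve (RatFunc F) :=
  ⟨0, 0, 0, algebraMap F[X] (RatFunc F) (C a * cubic a b ^ 2),
    algebraMap F[X] (RatFunc F) (C b * cubic a b ^ 3)⟩

lemma natDegree_cubic_eq : (cubic a b).natDegree = 3 := by
  unfold cubic
  compute_degree!

lemma cubic_ne_zero : cubic a b ≠ 0 :=
  ne_zero_of_natDegree_gt (n := 0) (by rw [natDegree_cubic_eq]; norm_num)

lemma algebraMap_cubic_ne_zero : algebraMap F[X] (RatFunc F) (cubic a b) ≠ 0 :=
  RatFunc.algebraMap_ne_zero (cubic_ne_zero a b)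

lemma isElliptic_shortCurve (h2 : (2 : F) ≠ 0) (hD : 4 * a ^ 3 + 27 * b ^ 2 ≠ 0) :
    (shortCurve a b).IsElliptic := by
  refine ⟨isUnit_iff_ne_zero.mpr ?_⟩
  have : (shortCurve a b).Δ = - 2 ^ 4 * (4 * a ^ 3 + 27 * b ^ 2) := by
    simp [shortCurve, Δ, b₂, b₄, b₆, b₈]
    ring
  rw [this]
  exact mul_ne_zero (neg_ne_zero.mpr (pow_ne_zero _ h2)) hD

lemma isElliptic_twist (h2 : (2 : F) ≠ 0) (hD : 4 * a ^ 3 + 27 * b ^ 2 ≠ 0) :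
    (twist a b).IsElliptic := by
  refine ⟨isUnit_iff_ne_zero.mpr ?_⟩
  have : (twist a b).Δ = algebraMap F[X] (RatFunc F)
      (C (- 2 ^ 4 * (4 * a ^ 3 + 27 * b ^ 2)) * cubic a b ^ 6) := by
    simp [twist, Δ, b₂, b₄, b₆, b₈, map_ofNat C,
    map_ofNat (algebraMap F[X] (RatFunc F))]
    ring
  rw [this]
  exact RatFunc.algebraMap_ne_zero (mul_ne_zero
    (C_ne_zero.mpr (mul_ne_zero (neg_ne_zero.mpr (pow_ne_zero _ h2)) hD))
    (pow_ne_zero _ (cubic_ne_zero a b)))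

variable {a b}

/-- The numerator of the `x`-coordinate of a point on the twist, divided by `cubic a b`. -/
noncomputable def xNum : (twist a b).toAffine.Point → F[X]
  | 0 => 1
  | .some x _ _ => (x / algebraMap F[X] (RatFunc F) (cubic a b)).num

/-- The denominator of the `x`-coordinate of a point on the twist, divided by `cubic a b`. -/
noncomputable def xDen : (twist a b).toAffine.Point → F[X]
  | 0 => 0
  | .some x _ _ => (x / algebraMap F[X] (RatFunc F) (cubic a b)).denom

/-- The degree of the `x`-coordinate of a point on the twist, divided by `cubic a b`. -/
noncomputable def xHeight (P : (twist a b).toAffine.Point) : ℕ :=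
  max (xNum P).natDegree (xDen P).natDegree

lemma isCoprime_xNum_xDen (P : (twist a b).toAffine.Point) : IsCoprime (xNum P) (xDen P) := by
  match P with
  | 0 => exact isCoprime_one_left
  | .some x _ _ => exact RatFunc.isCoprime_num_denom _

lemma exists_xRep_eq (P : (twist a b).toAffine.Point) : ∃ k : RatFunc F, k ≠ 0 ∧
    P.xRep 0 = k * algebraMap F[X] (RatFunc F) (cubic a b * xNum P) ∧
    P.xRep 1 = k * algebraMap F[X] (RatFunc F) (xDen P) := by
  have hc := algebraMap_cubic_ne_zero a b
  match P with
  | 0 => exact ⟨_, inv_ne_zero hc, by simp [xNum, hc], by simp [xDen]⟩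
  | .some x y h =>
    have hd := RatFunc.algebraMap_ne_zero
      (RatFunc.denom_ne_zero (x / algebraMap F[X] (RatFunc F) (cubic a b)))
    refine ⟨_, inv_ne_zero hd, ?_, by simp [xDen, hd]⟩
    simp only [Affine.Point.xRep_some, Matrix.cons_val_zero, xNum, map_mul]
    have := RatFunc.num_div_denom (x / algebraMap F[X] (RatFunc F) (cubic a b))
    rw [eq_div_iff hc] at this
    nth_rewrite 1 [← this]
    field_simp

/-- The weights with which the coordinates of `sym2x` scale on the twist. -/
noncomputable def twistWeight (a b : F) : Fin 3 → RatFunc F :=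
  ![algebraMap F[X] (RatFunc F) (cubic a b) ^ 2, algebraMap F[X] (RatFunc F) (cubic a b), 1]

lemma twistWeight_ne_zero (i : Fin 3) : twistWeight a b i ≠ 0 := by
  have hc := algebraMap_cubic_ne_zero a b
  fin_cases i <;> simp [twistWeight, hc]

lemma exists_sym2x_eq (P Q : (twist a b).toAffine.Point) : ∃ k : RatFunc F, k ≠ 0 ∧
    ∀ i, P.sym2x Q i = k * (twistWeight a b i *
      algebraMap F[X] (RatFunc F) (sym2Vec (xNum P) (xDen P) (xNum Q) (xDen Q) i)) := by
  obtain ⟨k, hk, h0, h1⟩ := exists_xRep_eq P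
  obtain ⟨l, hl, h0', h1'⟩ := exists_xRep_eq Q
  refine ⟨k * l, mul_ne_zero hk hl, fun i ↦ ?_⟩
  fin_cases i <;> simp [Affine.Point.sym2x, sym2Vec, twistWeight, h0, h1, h0', h1'] <;> ring

lemma eval_addSubMap_twist (k : RatFunc F) (s : Fin 3 → F[X]) (i : Fin 3) :
    (addSubMap (twist a b) i).eval
      (fun j ↦ k * (twistWeight a b j * algebraMap F[X] (RatFunc F) (s j))) =
    k ^ 2 * algebraMap F[X] (RatFunc F) (cubic a b) ^ 2 * (twistWeight a b i *
      algebraMap F[X] (RatFunc F) (constAddSub (shortCurve a b) s i)) := by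
  fin_cases i <;>
  simp [addSubMap, constAddSub, twistWeight, twist, shortCurve, b₂, b₄, b₆, b₈, map_ofNat C,
    map_ofNat (algebraMap F[X] (RatFunc F))] <;>
  ring

/-- The parallelogram law for `xHeight`. -/
theorem xHeight_add_add_xHeight_sub [DecidableEq (RatFunc F)] (h2 : (2 : F) ≠ 0)
    (hD : 4 * a ^ 3 + 27 * b ^ 2 ≠ 0) (P Q : (twist a b).toAffine.Point) :
    xHeight (P + Q) + xHeight (P - Q) = 2 * (xHeight P + xHeight Q) := by
  have := isElliptic_shortCurve a b h2 hD
  have := isElliptic_twist a b h2 hD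
  obtain ⟨k, hk, hk'⟩ := exists_eval_addSubMap_sym2x (twist a b) P Q
  obtain ⟨l, hl, hl'⟩ := exists_sym2x_eq P Q
  obtain ⟨m, hm, hm'⟩ := exists_sym2x_eq (P + Q) (P - Q)
  have hs := isPrimitiveVec_sym2Vec (isCoprime_xNum_xDen P) (isCoprime_xNum_xDen Q)
  have hs' := isPrimitiveVec_sym2Vec (isCoprime_xNum_xDen (P + Q)) (isCoprime_xNum_xDen (P - Q))
  have hc := algebraMap_cubic_ne_zero a b
  have key := IsPrimitiveVec.maxNatDegree_eq_of_proportional hs'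
    (isPrimitiveVec_constAddSub (shortCurve a b) hs)
    (k := l ^ 2 * algebraMap F[X] (RatFunc F) (cubic a b) ^ 2 / (k * m))
    (div_ne_zero (mul_ne_zero (pow_ne_zero _ hl) (pow_ne_zero _ hc)) (mul_ne_zero hk hm))
    (fun i ↦ by
      have h := hk' i
      rw [hm', funext hl', eval_addSubMap_twist] at h
      have hw := twistWeight_ne_zero (a := a) (b := b) i
      rw [div_mul_eq_mul_div, eq_div_iff (mul_ne_zero hk hm)]
      apply mul_left_cancel₀ hw
      linear_combination -h)
  rwa [maxNatDegree_constAddSub _ hs,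
    maxNatDegree_sym2Vec (isCoprime_xNum_xDen _) (isCoprime_xNum_xDen _),
    maxNatDegree_sym2Vec (isCoprime_xNum_xDen _) (isCoprime_xNum_xDen _)] at key

end Twist

section Roots

variable {F : Type*} [Field F]

lemma eval_cubic (a b c : F) : (cubic a b).eval c = c ^ 3 + a * c + b := by
  simp [cubic]

lemma eval_derivative_cubic_ne_zero {a b : F} (hD : 4 * a ^ 3 + 27 * b ^ 2 ≠ 0) {c : F}
    (hc : (cubic a b).eval c = 0) : (derivative (cubic a b)).eval c ≠ 0 := by
  intro h
  rw [eval_cubic] at hc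
  have h' : (2 + 1) * c ^ 2 + a = 0 := by simpa [cubic] using h
  apply hD
  have ha : a = - 3 * c ^ 2 := by linear_combination h'
  have hb : b = 2 * c ^ 3 := by linear_combination hc - c * ha
  rw [ha, hb]
  ring

lemma isCoprime_prod_X_sub_C {f : F[X]} {s : Finset F} (h : ∀ c ∈ s, f.eval c ≠ 0) :
    IsCoprime f (∏ c ∈ s, (X - C c)) :=
  IsCoprime.prod_right fun c hc ↦ ((irreducible_X_sub_C c).coprime_iff_not_dvd.mpr
    fun hd ↦ h c hc (dvd_iff_isRoot.mp hd)).symm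

lemma prod_X_sub_C_dvd {f : F[X]} {s : Finset F} (h : ∀ c ∈ s, f.eval c = 0) :
    ∏ c ∈ s, (X - C c) ∣ f :=
  Finset.prod_dvd_of_coprime
    (fun _ _ _ _ hne ↦ pairwise_coprime_X_sub_C Function.injective_id hne)
    fun c hc ↦ dvd_iff_isRoot.mpr (h c hc)

lemma eval_prod_X_sub_C_of_mem {s : Finset F} {c : F} (h : c ∈ s) :
    (∏ c ∈ s, (X - C c)).eval c = 0 := by
  rw [eval_prod]
  exact Finset.prod_eq_zero h (by simp)

lemma prod_univ_X_sub_C [Fintype F] :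
    ∏ c : F, (X - C c) = X ^ Fintype.card F - X := by
  have hq : 1 < Fintype.card F := Fintype.one_lt_card
  have hdeg := FiniteField.X_pow_card_sub_X_natDegree_eq F hq
  have hm : (X ^ Fintype.card F - X : F[X]).Monic :=
    monic_X_pow_sub (by rw [degree_X]; exact_mod_cast hq)
  have := prod_multiset_X_sub_C_of_monic_of_roots_card_eq hm (by
    rw [FiniteField.roots_X_pow_card_sub_X, hdeg]; rfl)
  rwa [FiniteField.roots_X_pow_card_sub_X] at this

lemma cubic_pow_card [Fintype F] (a b : F) : cubic a b ^ Fintype.card F =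
    X ^ (3 * Fintype.card F) + C a * X ^ Fintype.card F + C b := by
  rw [← FiniteField.expand_card]
  simp [cubic, ← pow_mul, mul_comm 3]

lemma natDegree_frobenius_sub_numerator [Fintype F] {a b : F} (hq : Odd (Fintype.card F)) :
    (cubic a b * (cubic a b ^ (Fintype.card F / 2) + 1) ^ 2 -
      (X ^ Fintype.card F + X) * (X ^ Fintype.card F - X) ^ 2).natDegree =
      2 * Fintype.card F + 1 := by
  have h1 : 1 < Fintype.card F := Fintype.one_lt_card
  have hp := cubic_pow_card a b
  generalize Fintype.card F = q at *
  obtain ⟨m, rfl⟩ := hq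
  have hm : (2 * m + 1) / 2 = m := by omega
  rw [hm]
  have : cubic a b * (cubic a b ^ m + 1) ^ 2 -
      (X ^ (2 * m + 1) + X) * (X ^ (2 * m + 1) - X) ^ 2 = X ^ (2 * (2 * m + 1) + 1) +
      (X ^ (2 * m + 3) - X ^ 3 + C a * X ^ (2 * m + 1) + C b + 2 * cubic a b ^ (m + 1) +
        cubic a b) := by
    linear_combination hp
  rw [this, natDegree_add_eq_left_of_natDegree_lt, natDegree_X_pow]
  rw [natDegree_X_pow, Nat.lt_succ_iff]
  have hc : (2 * cubic a b ^ (m + 1)).natDegree ≤ 2 * (2 * m + 1) := by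
    refine natDegree_mul_le.trans ?_
    rw [natDegree_ofNat, natDegree_pow, natDegree_cubic_eq]
    omega
  have hc' : (cubic a b).natDegree ≤ 2 * (2 * m + 1) := by
    rw [natDegree_cubic_eq]
    omega
  refine natDegree_add_le_of_degree_le (natDegree_add_le_of_degree_le ?_ hc) hc'
  compute_degree
  all_goals omega

end Roots

section Count

variable {F : Type*} [Field F] [Fintype F] [DecidableEq F] (a b : F)

/-- The elements at which `cubic a b` takes a value of quadratic character `e`. -/
noncomputable def charFiber (e : ℤ) : Finset F :=
  Finset.univ.filter fun c ↦ quadraticChar F ((cubic a b).eval c) = e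

lemma prod_charFiber {M : Type*} [CommMonoid M] (f : F → M) :
    (∏ c ∈ charFiber a b 1, f c) * (∏ c ∈ charFiber a b 0, f c) *
      ∏ c ∈ charFiber a b (-1), f c = ∏ c, f c := by
  simp only [charFiber, Finset.prod_filter, ← Finset.prod_mul_distrib]
  refine Finset.prod_congr rfl fun c _ ↦ ?_
  by_cases h : (cubic a b).eval c = 0
  · simp [h]
  · rcases quadraticChar_dichotomy h with h | h <;> simp [h]

lemma card_charFiber : (charFiber a b 1).card + (charFiber a b 0).card +
    (charFiber a b (-1)).card = Fintype.card F := by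
  have := prod_charFiber a b (fun _ ↦ Multiplicative.ofAdd 1)
  simpa [← ofAdd_nsmul, ← ofAdd_add, Finset.card_univ] using this

lemma card_points (hF : ringChar F ≠ 2) :
    (Finset.univ.filter fun P : F × F ↦ P.2 ^ 2 = P.1 ^ 3 + a * P.1 + b).card =
      2 * (charFiber a b 1).card + (charFiber a b 0).card := by
  have h1 : (Finset.univ.filter fun P : F × F ↦ P.2 ^ 2 = P.1 ^ 3 + a * P.1 + b).card =
      ∑ c : F, (Finset.univ.filter fun y : F ↦ y ^ 2 = c ^ 3 + a * c + b).card := by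
    simp only [Finset.card_filter]
    rw [Fintype.sum_prod_type]
  have h2 (c : F) : ((Finset.univ.filter fun y : F ↦ y ^ 2 = c ^ 3 + a * c + b).card : ℤ) =
      2 * (if quadraticChar F ((cubic a b).eval c) = 1 then 1 else 0) +
        if quadraticChar F ((cubic a b).eval c) = 0 then 1 else 0 := by
    have h := quadraticChar_card_sqrts hF ((cubic a b).eval c)
    have h3 : (Finset.univ.filter fun y : F ↦ y ^ 2 = c ^ 3 + a * c + b) =
        {x : F | x ^ 2 = (cubic a b).eval c}.toFinset := by
      ext; simp [eval_cubic]
    rw [h3, h]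
    by_cases h : (cubic a b).eval c = 0
    · simp [h]
    · rcases quadraticChar_dichotomy h with h | h <;> simp [h]
  zify
  rw [h1, Nat.cast_sum, Finset.sum_congr rfl fun c _ ↦ h2 c, Finset.sum_add_distrib,
    ← Finset.mul_sum]
  simp [charFiber]

variable {a b}

lemma quadraticChar_fiber_pow {e : ℤ} (hF : ringChar F ≠ 2) {c : F} (hc : c ∈ charFiber a b e) :
    (cubic a b).eval c ^ (Fintype.card F / 2) = e := by
  rw [← quadraticChar_eq_pow_of_char_ne_two' hF]
  simp only [charFiber, Finset.mem_filter] at hc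
  rw [hc.2]

lemma eval_cubic_eq_zero_of_mem {c : F} (hc : c ∈ charFiber a b 0) : (cubic a b).eval c = 0 := by
  simp only [charFiber, Finset.mem_filter] at hc
  exact quadraticChar_eq_zero_iff.mp hc.2

lemma eval_cubic_ne_zero_of_mem {c : F} (hc : c ∈ charFiber a b 1) : (cubic a b).eval c ≠ 0 := by
  simp only [charFiber, Finset.mem_filter] at hc
  intro h
  simp [h] at hc

/-- The reduced form of the fraction `x(φ - Q) / cubic a b`, where `φ` is the Frobenius point and
`Q` the generic point of the twist. -/
lemma exists_reduced_frobenius_sub (hF : ringChar F ≠ 2) (hD : 4 * a ^ 3 + 27 * b ^ 2 ≠ 0) :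
    ∃ u v w : F[X], IsCoprime u v ∧ w ≠ 0 ∧
      cubic a b * (cubic a b ^ (Fintype.card F / 2) + 1) ^ 2 -
        (X ^ Fintype.card F + X) * (X ^ Fintype.card F - X) ^ 2 = w * u ∧
      (X ^ Fintype.card F - X) ^ 2 = w * v ∧
      max u.natDegree v.natDegree = 2 * (charFiber a b 1).card + (charFiber a b 0).card + 1 := by
  have h2 : (2 : F) ≠ 0 := Ring.two_ne_zero hF
  have hq : Odd (Fintype.card F) := Nat.odd_iff.mpr (FiniteField.odd_card_of_char_ne_two hF)
  have hprod := (prod_charFiber a b fun c ↦ X - C c).trans prod_univ_X_sub_C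
  have hpow {e : ℤ} {c : F} (hc : c ∈ charFiber a b e) :
      (cubic a b ^ (Fintype.card F / 2) + 1).eval c = e + 1 := by
    simp [quadraticChar_fiber_pow hF hc]
  obtain ⟨l, hl⟩ : ∏ c ∈ charFiber a b 0, (X - C c) ∣ cubic a b :=
    prod_X_sub_C_dvd fun c hc ↦ eval_cubic_eq_zero_of_mem hc
  obtain ⟨M, hM⟩ : ∏ c ∈ charFiber a b (-1), (X - C c) ∣
      cubic a b ^ (Fintype.card F / 2) + 1 :=
    prod_X_sub_C_dvd fun c hc ↦ by rw [hpow hc]; simp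
  have hcard := card_charFiber a b
  have hdeg := natDegree_frobenius_sub_numerator (a := a) (b := b) hq
  have hA : (∏ c ∈ charFiber a b 1, (X - C c)).natDegree = (charFiber a b 1).card :=
    natDegree_finsetProd_X_sub_C_eq_card _ _
  have hB : (∏ c ∈ charFiber a b 0, (X - C c)).natDegree = (charFiber a b 0).card :=
    natDegree_finsetProd_X_sub_C_eq_card _ _
  have hC : (∏ c ∈ charFiber a b (-1), (X - C c)).natDegree = (charFiber a b (-1)).card :=
    natDegree_finsetProd_X_sub_C_eq_card _ _
  have hA0 : ∏ c ∈ charFiber a b 1, (X - C c) ≠ 0 := (monic_prod_X_sub_C _ _).ne_zero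
  have hB0 : ∏ c ∈ charFiber a b 0, (X - C c) ≠ 0 := (monic_prod_X_sub_C _ _).ne_zero
  have hC0 : ∏ c ∈ charFiber a b (-1), (X - C c) ≠ 0 := (monic_prod_X_sub_C _ _).ne_zero
  have hl1 : ∀ c ∈ charFiber a b 1, (l * M ^ 2).eval c ≠ 0 := by
    intro c hc
    have e1 := eval_cubic_ne_zero_of_mem hc
    have e2 := hpow hc
    rw [hl, eval_mul] at e1
    rw [hM, eval_mul] at e2
    have e3 : M.eval c ≠ 0 := by
      intro h
      rw [h, mul_zero] at e2
      apply h2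
      rw [← one_add_one_eq_two, e2]
      simp
    rw [eval_mul, eval_pow]
    exact mul_ne_zero (right_ne_zero_of_mul e1) (pow_ne_zero _ e3)
  have hl0 : ∀ c ∈ charFiber a b 0, (l * M ^ 2).eval c ≠ 0 := by
    intro c hc
    have e1 := eval_derivative_cubic_ne_zero hD (eval_cubic_eq_zero_of_mem hc)
    have e2 := hpow hc
    rw [hl, derivative_mul, eval_add, eval_mul, eval_mul, eval_prod_X_sub_C_of_mem hc, zero_mul,
      add_zero] at e1
    rw [hM, eval_mul] at e2
    have e3 : M.eval c ≠ 0 := by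
      intro h
      simp [h] at e2
    rw [eval_mul, eval_pow]
    exact mul_ne_zero (right_ne_zero_of_mul e1) (pow_ne_zero _ e3)
  have hcop1 := isCoprime_prod_X_sub_C hl1
  have hcop0 := isCoprime_prod_X_sub_C hl0
  rw [← hprod, hM] at hdeg ⊢
  generalize ∏ c ∈ charFiber a b 1, (X - C c) = A at *
  generalize ∏ c ∈ charFiber a b 0, (X - C c) = B at *
  generalize ∏ c ∈ charFiber a b (-1), (X - C c) = D at *
  have hnum : cubic a b * (D * M) ^ 2 - (X ^ Fintype.card F + X) * (A * B * D) ^ 2 =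
      B * D ^ 2 * (l * M ^ 2 - (X ^ Fintype.card F + X) * (A ^ 2 * B)) := by
    rw [hl]
    ring
  refine ⟨l * M ^ 2 - (X ^ Fintype.card F + X) * (A ^ 2 * B), A ^ 2 * B, B * D ^ 2, ?_,
    mul_ne_zero hB0 (pow_ne_zero _ hC0), hnum, by ring, ?_⟩
  · rw [sub_eq_add_neg, ← neg_mul]
    exact ((hcop1.pow_right).mul_right hcop0).add_mul_right_left _
  · rw [hnum] at hdeg
    have hu : l * M ^ 2 - (X ^ Fintype.card F + X) * (A ^ 2 * B) ≠ 0 := by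
      intro h
      simp [h] at hdeg
    rw [natDegree_mul (mul_ne_zero hB0 (pow_ne_zero _ hC0)) hu,
      natDegree_mul hB0 (pow_ne_zero _ hC0), natDegree_pow] at hdeg
    rw [natDegree_mul (pow_ne_zero _ hA0) hB0, natDegree_pow]
    omega

end Count

section Frobenius

open WeierstrassCurve

variable {F : Type*} [Field F] {a b : F}

lemma max_natDegree_num_denom {x : RatFunc F} {u v : F[X]} (h : IsCoprime u v) (hv : v ≠ 0)
    (hx : x * algebraMap F[X] (RatFunc F) v = algebraMap F[X] (RatFunc F) u) :
    max x.num.natDegree x.denom.natDegree = max u.natDegree v.natDegree := by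
  have hx' : x = algebraMap F[X] (RatFunc F) u / algebraMap F[X] (RatFunc F) v :=
    eq_div_of_mul_eq (RatFunc.algebraMap_ne_zero hv) hx
  have key : x.num * v = u * x.denom := by
    rw [RatFunc.num_mul_eq_mul_denom_iff hv, hx']
  have hc := RatFunc.isCoprime_num_denom x
  have h1 : Associated x.num u := associated_of_dvd_dvd
    (hc.dvd_of_dvd_mul_right (Dvd.intro _ key)) (h.dvd_of_dvd_mul_right (Dvd.intro _ key.symm))
  have h2 : Associated x.denom v := associated_of_dvd_dvd
    (hc.symm.dvd_of_dvd_mul_left (Dvd.intro_left _ key.symm))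
    (h.symm.dvd_of_dvd_mul_left (Dvd.intro_left _ key))
  rw [natDegree_eq_of_degree_eq (degree_eq_degree_of_associated h1),
    natDegree_eq_of_degree_eq (degree_eq_degree_of_associated h2)]

lemma xHeight_some {x y : RatFunc F} (hP : (twist a b).toAffine.Nonsingular x y) {u v : F[X]}
    (h : IsCoprime u v) (hv : v ≠ 0)
    (hx : x * algebraMap F[X] (RatFunc F) v = algebraMap F[X] (RatFunc F) (cubic a b * u)) :
    xHeight (.some x y hP : (twist a b).toAffine.Point) = max u.natDegree v.natDegree := by
  have hc := algebraMap_cubic_ne_zero a b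
  refine max_natDegree_num_denom h hv ?_
  rw [div_mul_eq_mul_div, hx, map_mul, mul_div_cancel_left₀ _ hc]

lemma equation_twist (f g : F[X]) (h : cubic a b * g ^ 2 = f ^ 3 + C a * f + C b) :
    (twist a b).toAffine.Equation (algebraMap F[X] (RatFunc F) (cubic a b * f))
      (algebraMap F[X] (RatFunc F) (cubic a b ^ 2 * g)) := by
  rw [Affine.equation_iff]
  have := congrArg (algebraMap F[X] (RatFunc F)) h
  simp only [map_mul, map_pow, map_add] at this
  simp only [twist, map_mul, map_pow]
  linear_combination algebraMap F[X] (RatFunc F) (cubic a b) ^ 3 * this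

/-- The point of the twist with coordinates `(cubic a b * f, cubic a b ^ 2 * g)`. -/
noncomputable def twistPoint (h2 : (2 : F) ≠ 0) (hD : 4 * a ^ 3 + 27 * b ^ 2 ≠ 0) (f g : F[X])
    (h : cubic a b * g ^ 2 = f ^ 3 + C a * f + C b) : (twist a b).toAffine.Point :=
  .some _ _ ((Affine.equation_iff_nonsingular_of_Δ_ne_zero
    (isElliptic_twist a b h2 hD).isUnit.ne_zero).mp (equation_twist f g h))

lemma xHeight_twistPoint (h2 : (2 : F) ≠ 0) (hD : 4 * a ^ 3 + 27 * b ^ 2 ≠ 0) (f g : F[X])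
    (h : cubic a b * g ^ 2 = f ^ 3 + C a * f + C b) :
    xHeight (twistPoint h2 hD f g h) = f.natDegree := by
  unfold twistPoint
  rw [xHeight_some _ isCoprime_one_right one_ne_zero (by rw [map_one, mul_one])]
  simp

lemma xHeight_twistPoint_sub [DecidableEq (RatFunc F)] (h2 : (2 : F) ≠ 0)
    (hD : 4 * a ^ 3 + 27 * b ^ 2 ≠ 0) (f g f' g' : F[X])
    (h : cubic a b * g ^ 2 = f ^ 3 + C a * f + C b)
    (h' : cubic a b * g' ^ 2 = f' ^ 3 + C a * f' + C b) (hne : f ≠ f') {u v w : F[X]}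
    (huv : IsCoprime u v) (hw : w ≠ 0)
    (hu : cubic a b * (g + g') ^ 2 - (f + f') * (f - f') ^ 2 = w * u)
    (hv : (f - f') ^ 2 = w * v) :
    xHeight (twistPoint h2 hD f g h - twistPoint h2 hD f' g' h') =
      max u.natDegree v.natDegree := by
  have hc := algebraMap_cubic_ne_zero a b
  have hw' := RatFunc.algebraMap_ne_zero hw
  have hff : algebraMap F[X] (RatFunc F) f - algebraMap F[X] (RatFunc F) f' ≠ 0 := by
    rw [← map_sub]
    exact RatFunc.algebraMap_ne_zero (sub_ne_zero.mpr hne)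
  have hX : algebraMap F[X] (RatFunc F) (cubic a b * f) ≠
      algebraMap F[X] (RatFunc F) (cubic a b * f') :=
    fun he ↦ hne (mul_left_cancel₀ (cubic_ne_zero a b) (RatFunc.algebraMap_injective F he))
  have hv0 : v ≠ 0 := by
    rintro rfl
    rw [mul_zero] at hv
    exact hne (sub_eq_zero.mp (pow_eq_zero_iff two_ne_zero |>.mp hv))
  unfold twistPoint
  rw [sub_eq_add_neg, Affine.Point.neg_some, Affine.Point.add_of_X_ne hX]
  refine xHeight_some _ huv hv0 (mul_left_cancel₀ hw' ?_)
  have hu' := congrArg (algebraMap F[X] (RatFunc F)) hu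
  have hv' := congrArg (algebraMap F[X] (RatFunc F)) hv
  rw [Affine.slope_of_X_ne hX]
  simp only [map_mul, map_pow, map_add, map_sub] at hu' hv'
  simp only [Affine.addX, Affine.negY, twist, map_mul, map_pow]
  have hs : algebraMap F[X] (RatFunc F) (cubic a b) * algebraMap F[X] (RatFunc F) f -
      algebraMap F[X] (RatFunc F) (cubic a b) * algebraMap F[X] (RatFunc F) f' ≠ 0 := by
    rw [← mul_sub]
    exact mul_ne_zero hc hff
  generalize algebraMap F[X] (RatFunc F) (cubic a b) = c at *
  generalize algebraMap F[X] (RatFunc F) f = x at *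
  generalize algebraMap F[X] (RatFunc F) f' = x' at *
  generalize algebraMap F[X] (RatFunc F) g = y at *
  generalize algebraMap F[X] (RatFunc F) g' = y' at *
  generalize algebraMap F[X] (RatFunc F) u = U at *
  generalize algebraMap F[X] (RatFunc F) v = V at *
  generalize algebraMap F[X] (RatFunc F) w = W at *
  have hsl : (c ^ 2 * y - (-(c ^ 2 * y') - 0 * (c * x') - 0)) / (c * x - c * x') =
      c * (y + y') / (x - x') := by
    rw [div_eq_div_iff hs hff]
    ring
  rw [hsl]
  have : (c * (y + y') / (x - x')) ^ 2 * (x - x') ^ 2 = c ^ 2 * (y + y') ^ 2 := by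
    rw [div_pow, div_mul_cancel₀ _ (pow_ne_zero _ hff)]
    ring
  linear_combination c * hu' + this - ((c * (y + y') / (x - x')) ^ 2 - c * x - c * x') * hv'

/-- A function on `ℤ` whose second difference is `2` is a monic quadratic polynomial. -/
lemma eq_quadratic_of_second_difference {d : ℤ → ℤ}
    (h : ∀ n, d (n + 1) + d (n - 1) = 2 * d n + 2) (n : ℤ) :
    d n = n ^ 2 + (d 0 + 1 - d (-1)) * n + d 0 := by
  suffices d n = n ^ 2 + (d 0 + 1 - d (-1)) * n + d 0 ∧
      d (n - 1) = (n - 1) ^ 2 + (d 0 + 1 - d (-1)) * (n - 1) + d 0 from this.1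
  induction n with
  | zero => constructor <;> [ring; (rw [zero_sub]; ring)]
  | succ k ih =>
    refine ⟨?_, by rw [add_sub_cancel_right]; exact ih.1⟩
    linear_combination h k + 2 * ih.1 - ih.2
  | pred k ih =>
    refine ⟨ih.2, ?_⟩
    have h' := h (-k - 1)
    rw [sub_add_cancel] at h'
    linear_combination h' - ih.1 + 2 * ih.2

lemma sq_le_of_quadratic_nonneg {q t : ℤ} (hq : Odd q) (h : ∀ n : ℤ, 0 ≤ n ^ 2 + t * n + q) :
    t ^ 2 ≤ 4 * q := by
  obtain ⟨k, rfl | rfl⟩ := Int.even_or_odd' t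
  · nlinarith [h (-k)]
  · have h1 := h (-k)
    have h2 : k * (k + 1) ≠ q := by
      rintro rfl
      exact (Int.not_even_iff_odd.mpr hq) (Int.even_mul_succ_self k)
    have h3 : k * (k + 1) ≤ q := by nlinarith
    have h4 : k * (k + 1) < q := lt_of_le_of_ne h3 h2
    nlinarith

/-- **Hasse's theorem** for `y² = x³ + ax + b` over a finite field of odd characteristic. -/
theorem hasse_sq_le [Fintype F] [DecidableEq F] (hF : ringChar F ≠ 2)
    (hD : 4 * a ^ 3 + 27 * b ^ 2 ≠ 0) :
    ((Fintype.card F : ℤ) + 1 - ((Finset.univ.filter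
      fun P : F × F ↦ P.2 ^ 2 = P.1 ^ 3 + a * P.1 + b).card + 1)) ^ 2 ≤ 4 * Fintype.card F := by
  classical
  have h2 : (2 : F) ≠ 0 := Ring.two_ne_zero hF
  have hq : Odd (Fintype.card F) := Nat.odd_iff.mpr (FiniteField.odd_card_of_char_ne_two hF)
  have hq1 : 1 < Fintype.card F := Fintype.one_lt_card
  have hφ : cubic a b * (cubic a b ^ (Fintype.card F / 2)) ^ 2 =
      (X ^ Fintype.card F) ^ 3 + C a * X ^ Fintype.card F + C b := by
    rw [← pow_mul, ← pow_succ', ← pow_mul, mul_comm _ 3, ← cubic_pow_card]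
    congr 1
    have := Nat.odd_iff.mp hq
    omega
  have hQ : cubic a b * 1 ^ 2 = X ^ 3 + C a * X + C b := by simp [cubic]
  have hne : (X ^ Fintype.card F : F[X]) ≠ X := fun h ↦
    FiniteField.X_pow_card_sub_X_ne_zero F hq1 (sub_eq_zero.mpr h)
  obtain ⟨u, v, w, huv, hw, hu, hv, hmax⟩ := exists_reduced_frobenius_sub hF hD
  have hdiff := xHeight_twistPoint_sub h2 hD _ _ _ _ hφ hQ hne huv hw hu hv
  rw [hmax] at hdiff
  have hhφ := xHeight_twistPoint h2 hD _ _ hφ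
  have hhQ := xHeight_twistPoint h2 hD _ _ hQ
  rw [natDegree_X_pow] at hhφ
  rw [natDegree_X] at hhQ
  generalize twistPoint h2 hD _ _ hφ = φ at *
  generalize twistPoint h2 hD _ _ hQ = Q at *
  have hrec := eq_quadratic_of_second_difference (d := fun n ↦ (xHeight (φ + n • Q) : ℤ)) (by
    intro n
    have := xHeight_add_add_xHeight_sub h2 hD (φ + n • Q) Q
    rw [hhQ] at this
    simp only [add_zsmul, sub_zsmul, one_zsmul, ← add_assoc]
    exact_mod_cast this)
  simp only [zero_zsmul, add_zero, neg_zsmul, one_zsmul, ← sub_eq_add_neg, hdiff, hhφ] at hrec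
  rw [card_points a b hF]
  refine sq_le_of_quadratic_nonneg (by exact_mod_cast hq) fun n ↦ ?_
  have := hrec n
  push_cast at this ⊢
  rw [← this]
  positivity

end Frobenius

end EllipticCurve

theorem stmt_4 (p : ℕ) [Fact p.Prime] (hp : 3 < p) (a b : ZMod p)
    (hD : 4 * a ^ 3 + 27 * b ^ 2 ≠ 0) :
    |(p : ℝ) + 1 - (((Finset.univ.filter
        (fun P : ZMod p × ZMod p => P.2 ^ 2 = P.1 ^ 3 + a * P.1 + b)).card + 1 : ℕ) : ℝ)|
      ≤ 2 * Real.sqrt p := by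
  have hF : ringChar (ZMod p) ≠ 2 := by
    rw [ZMod.ringChar_zmod_n]
    omega
  have h := hasse_sq_le hF hD
  rw [ZMod.card] at h
  have h' : ((p : ℝ) + 1 - (((Finset.univ.filter
      (fun P : ZMod p × ZMod p => P.2 ^ 2 = P.1 ^ 3 + a * P.1 + b)).card + 1 : ℕ) : ℝ)) ^ 2 ≤
      (2 * Real.sqrt p) ^ 2 := by
    rw [mul_pow, Real.sq_sqrt (Nat.cast_nonneg p)]
    norm_num
    norm_num at h
    exact_mod_cast h
  exact abs_le_of_sq_le_sq h' (by positivity)
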